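/- Let n ≥ 3 and m ≥ n be integers and let B be a cyclic subgroup of (ℤ/2^nℤ)ˣ of order at least 4. Then the preimage H = π_{m,n}^{-1}(B) of B under the natural projection π_{m,n} : (ℤ/2^mℤ)ˣ → (ℤ/2^nℤ)ˣ is a cyclic subgroup of (ℤ/2^mℤ)ˣ. -/

import Mathlib

/-!
Let `x` be a unit modulo `p ^ m`, let `k` satisfy `k + 2 ≤ p * k` (that is, `k ≥ 1`, and `k ≥ 2` if
`p = 2`), and let `e` be the order of `x` modulo `p ^ k`. If `x ^ e` is represented by the integer
`1 + p ^ l * u` with `l ≥ k` and `p ∤ u`, then its order modulo `p ^ j` is exactly `p ^ (j - l)` for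
every `j ≥ l`. If moreover `l < n`, that is, if the order of `x` modulo `p ^ n` differs from `e`,
then passing from `p ^ n` to `p ^ m` multiplies the order of `x` by `p ^ (m - n)`, which is the size
of the kernel of the projection. This forces the kernel into the group generated by `x`, which is
then the full preimage of its image. For `p = 2` and `k = 2` there are only two units modulo `4`, so
a cyclic group of order at least `4` cannot embed modulo `4`.
-/

open TopologicalSpace

/-- The arithmetic progression `a + bℕ₀ = {a + b*n : n ≥ 0}` inside the positive integers. -/
def golombBasic (a b : ℕ) : Set ℕ+ := {x : ℕ+ | ∃ n : ℕ, (x : ℕ) = a + b * n}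

/-- The Golomb topology on the positive integers, generated by the arithmetic
progressions `a + bℕ₀` with coprime `a, b ∈ ℕ`. -/
instance golombTopology : TopologicalSpace ℕ+ :=
  generateFrom {S : Set ℕ+ | ∃ a b : ℕ, 0 < a ∧ 0 < b ∧ Nat.Coprime a b ∧ S = golombBasic a b}

/-- The positive integers not divisible by `p` (the set `ℕ \ pℕ`). -/
abbrev Np (p : ℕ) : Type := {x : ℕ+ // ¬ p ∣ (x : ℕ)}

/-- The `p`-adic topology on `ℕ \ pℕ`, generated by the traces of the sets
`x + p^nℕ₀`, `x, n ∈ ℕ`. -/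
def padicTop (p : ℕ) : TopologicalSpace (Np p) :=
  generateFrom {S : Set (Np p) | ∃ x n : ℕ, 0 < x ∧ 0 < n ∧
    S = {y : Np p | ∃ k : ℕ, ((y : ℕ+) : ℕ) = x + p ^ n * k}}

/-- Closure of a set of positive integers in the `p`-adic topology on `ℕ \ pℕ`,
viewed again as a set of positive integers. -/
def padicClosure (p : ℕ) (A : Set ℕ+) : Set ℕ+ :=
  Subtype.val '' (@closure (Np p) (padicTop p) (Subtype.val ⁻¹' A))

/-- `a^ℕ = {a^k : k ∈ ℕ}`, the set of positive powers of `a`. -/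
def powSet (a : ℕ) : Set ℕ+ := {y : ℕ+ | ∃ k : ℕ, 0 < k ∧ (y : ℕ) = a ^ k}

/-- The closure of `a^ℕ` in the `p`-adic topology on `ℕ \ pℕ`. -/
def clPow (p a : ℕ) : Set ℕ+ := padicClosure p (powSet a)

/-- The family `𝒳_p` of closures of the sets `a^ℕ` for `a ∈ ℕ \ pℕ`, `a ≠ 1`. -/
def XX (p : ℕ) : Set (Set ℕ+) := {X | ∃ a : ℕ, 0 < a ∧ a ≠ 1 ∧ ¬ p ∣ a ∧ X = clPow p a}

/-- The projection `π_n(X)` of a set of positive integers to `ℤ/p^nℤ`. -/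
def pin (p n : ℕ) (X : Set ℕ+) : Set (ZMod (p ^ n)) :=
  (fun y : ℕ+ => ((y : ℕ) : ZMod (p ^ n))) '' X

/-- `n(X)`: the least `n ∈ ℕ` with `X = ℕ ∩ π_n⁻¹(π_n(X))` and `|π_n(X)| ≥ max(p,3)`. -/
noncomputable def nX (p : ℕ) (X : Set ℕ+) : ℕ :=
  sInf {n : ℕ | 0 < n ∧ X = {y : ℕ+ | ((y : ℕ) : ZMod (p ^ n)) ∈ pin p n X} ∧
    max p 3 ≤ (pin p n X).ncard}

/-- `i(X)`: the index of the subgroup `π_{n(X)}(X)` in the group of units of `ℤ/p^{n(X)}ℤ`. -/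
noncomputable def iX (p : ℕ) (X : Set ℕ+) : ℕ :=
  Nat.card ((ZMod (p ^ nX p X))ˣ) / (pin p (nX p X) X).ncard

section CyclicPreimage

variable {G G' : Type*} [Group G] [Group G']

lemma injOn_zpowers_of_orderOf_map_eq (f : G →* G') {g : G} (h : orderOf (f g) = orderOf g) :
    Set.InjOn f (Subgroup.zpowers g) := by
  rintro _ ⟨i, rfl⟩ _ ⟨j, rfl⟩ hij
  simpa only [map_zpow, zpow_eq_zpow_iff_modEq, h] using hij

lemma ker_le_zpowers_of_orderOf_eq (f : G →* G') [Finite f.ker] {x : G}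
    (hfx : orderOf (f x) ≠ 0) (hx : orderOf x = orderOf (f x) * Nat.card f.ker) :
    f.ker ≤ Subgroup.zpowers x := by
  have hpow_mem : x ^ orderOf (f x) ∈ f.ker := by
    rw [MonoidHom.mem_ker, map_pow, pow_orderOf_eq_one]
  have hpow_order : orderOf (x ^ orderOf (f x)) = Nat.card f.ker := by
    rw [orderOf_pow_of_dvd hfx (orderOf_map_dvd f x), hx,
      Nat.mul_div_cancel_left _ (Nat.pos_of_ne_zero hfx)]
  have hker : Subgroup.zpowers (x ^ orderOf (f x)) = f.ker :=
    Subgroup.eq_of_le_of_card_ge (Subgroup.zpowers_le.mpr hpow_mem)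
      (by rw [Nat.card_zpowers, hpow_order])
  rw [← hker, Subgroup.zpowers_le]
  exact Subgroup.npow_mem_zpowers x _

lemma isCyclic_comap_zpowers_of_ker_le (f : G →* G') {x : G} (h : f.ker ≤ Subgroup.zpowers x) :
    IsCyclic ((Subgroup.zpowers (f x)).comap f) := by
  rw [← MonoidHom.map_zpowers, Subgroup.comap_map_eq_self h]
  infer_instance

end CyclicPreimage

lemma card_ker_unitsMap_mul_totient {d N : ℕ} [NeZero N] (h : d ∣ N) :
    Nat.card (ZMod.unitsMap h).ker * d.totient = N.totient := by
  have : NeZero d := ⟨ne_zero_of_dvd_ne_zero (NeZero.ne N) h⟩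
  have hindex := (ZMod.unitsMap h).ker.card_mul_index
  rwa [Subgroup.index_ker, MonoidHom.range_eq_top.mpr (ZMod.unitsMap_surjective h),
    Subgroup.card_top, Nat.card_eq_fintype_card (α := (ZMod d)ˣ),
    Nat.card_eq_fintype_card (α := (ZMod N)ˣ), ZMod.card_units_eq_totient,
    ZMod.card_units_eq_totient] at hindex

lemma val_unitsMap_eq_intCast {d N : ℕ} (h : d ∣ N) {x : (ZMod N)ˣ} {a : ℤ}
    (ha : (a : ZMod N) = x) : (ZMod.unitsMap h x : ZMod d) = a := by
  rw [ZMod.unitsMap_val, ← ha, ZMod.cast_intCast h]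

lemma unitsMap_eq_one_iff_dvd_sub_one {d N : ℕ} (h : d ∣ N) {x : (ZMod N)ˣ} {a : ℤ}
    (ha : (a : ZMod N) = x) : ZMod.unitsMap h x = 1 ↔ (d : ℤ) ∣ a - 1 := by
  rw [← Units.val_inj, val_unitsMap_eq_intCast h ha, Units.val_one, ← sub_eq_zero,
    ← ZMod.intCast_zmod_eq_zero_iff_dvd, Int.cast_sub, Int.cast_one]

lemma not_injOn_unitsMap_of_totient_lt_card {d N : ℕ} [NeZero d] (h : d ∣ N)
    {B : Subgroup (ZMod N)ˣ} (hB : d.totient < Nat.card B) :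
    ¬ Set.InjOn (ZMod.unitsMap h) B := by
  intro hinj
  have hle := Nat.card_le_card_of_injective _ hinj.injective
  rw [Nat.card_eq_fintype_card (α := (ZMod d)ˣ), ZMod.card_units_eq_totient] at hle
  exact hB.not_ge hle

section PrimePow

variable {p k n m : ℕ}

lemma card_ker_unitsMap_prime_pow (hp : p.Prime) (hn : n ≠ 0) (hnm : n ≤ m) :
    Nat.card (ZMod.unitsMap (pow_dvd_pow p hnm)).ker = p ^ (m - n) := by
  have : NeZero p := ⟨hp.ne_zero⟩
  refine Nat.eq_of_mul_eq_mul_right (Nat.totient_pos.mpr (pow_pos hp.pos n)) ?_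
  rw [card_ker_unitsMap_mul_totient, Nat.totient_prime_pow hp (by omega),
    Nat.totient_prime_pow hp (by omega), ← mul_assoc, ← pow_add]
  congr 2
  omega

lemma exists_orderOf_intCast_prime_pow_add (hp : p.Prime) (hk : k + 2 ≤ p * k) {a : ℤ}
    (ha : (p : ℤ) ^ k ∣ a - 1) (ha1 : a ≠ 1) :
    ∃ l, (p : ℤ) ^ l ∣ a - 1 ∧ ∀ d, orderOf (a : ZMod (p ^ (d + l))) = p ^ d := by
  have hfin : FiniteMultiplicity (p : ℤ) (a - 1) :=
    Int.finiteMultiplicity_iff.mpr ⟨by simpa using hp.ne_one, sub_ne_zero.mpr ha1⟩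
  obtain ⟨u, hau, hpu⟩ := hfin.exists_eq_pow_mul_and_not_dvd
  set l := multiplicity (p : ℤ) (a - 1)
  have hkl : k ≤ l := hfin.le_multiplicity_of_pow_dvd ha
  have hl : l + 2 ≤ p * l := by nlinarith [hp.two_le]
  refine ⟨l, ⟨u, hau⟩, fun d => ?_⟩
  have hcast : (a : ZMod (p ^ (d + l))) = 1 + p ^ l * u := by
    rw [← sub_eq_iff_eq_add']
    exact_mod_cast congrArg (Int.cast : ℤ → ZMod (p ^ (d + l))) hau
  rw [hcast, ZMod.orderOf_one_add_mul_prime_pow hp l (by rintro h; simp [h] at hl) hl u hpu]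

lemma orderOf_intCast_prime_pow_eq_mul (hp : p.Prime) (hk : k + 2 ≤ p * k) (hnm : n ≤ m) {a : ℤ}
    (ha : (p : ℤ) ^ k ∣ a - 1) (han : ¬ (p : ℤ) ^ n ∣ a - 1) :
    orderOf (a : ZMod (p ^ m)) = orderOf (a : ZMod (p ^ n)) * p ^ (m - n) := by
  obtain ⟨l, hl, horder⟩ :=
    exists_orderOf_intCast_prime_pow_add hp hk ha (by rintro rfl; simp at han)
  have hln : l < n := by
    by_contra! hnl
    exact han ((pow_dvd_pow _ hnl).trans hl)
  obtain ⟨c, rfl⟩ := Nat.exists_eq_add_of_le' hln.le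
  obtain ⟨d, rfl⟩ := Nat.exists_eq_add_of_le' hnm
  rw [← add_assoc, horder, horder, ← pow_add]
  congr 1
  omega

lemma orderOf_eq_mul_of_unitsMap_eq_one (hp : p.Prime) (hk : k + 2 ≤ p * k) (hkm : k ≤ m)
    (hnm : n ≤ m) {x : (ZMod (p ^ m))ˣ} (hxk : ZMod.unitsMap (pow_dvd_pow p hkm) x = 1)
    (hxn : ZMod.unitsMap (pow_dvd_pow p hnm) x ≠ 1) :
    orderOf x = orderOf (ZMod.unitsMap (pow_dvd_pow p hnm) x) * p ^ (m - n) := by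
  obtain ⟨a, ha⟩ := ZMod.intCast_surjective (x : ZMod (p ^ m))
  rw [unitsMap_eq_one_iff_dvd_sub_one _ ha, Nat.cast_pow] at hxk
  rw [Ne, unitsMap_eq_one_iff_dvd_sub_one _ ha, Nat.cast_pow] at hxn
  rw [← orderOf_units, ← orderOf_units, val_unitsMap_eq_intCast _ ha, ← ha]
  exact orderOf_intCast_prime_pow_eq_mul hp hk hnm hxk hxn

lemma orderOf_eq_orderOf_unitsMap_mul (hp : p.Prime) (hk : k + 2 ≤ p * k) (hkn : k ≤ n)
    (hnm : n ≤ m) {x : (ZMod (p ^ m))ˣ}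
    (hx : orderOf (ZMod.unitsMap (pow_dvd_pow p (hkn.trans hnm)) x) ≠
      orderOf (ZMod.unitsMap (pow_dvd_pow p hnm) x)) :
    orderOf x = orderOf (ZMod.unitsMap (pow_dvd_pow p hnm) x) * p ^ (m - n) := by
  have : NeZero p := ⟨hp.ne_zero⟩
  set xₙ := ZMod.unitsMap (pow_dvd_pow p hnm) x
  set xₖ := ZMod.unitsMap (pow_dvd_pow p (hkn.trans hnm)) x
  have hxₖ : ZMod.unitsMap (pow_dvd_pow p hkn) xₙ = xₖ :=
    DFunLike.congr_fun (ZMod.unitsMap_comp _ _) x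
  have hdvd_n : orderOf xₖ ∣ orderOf xₙ := hxₖ ▸ orderOf_map_dvd _ xₙ
  have hdvd : orderOf xₖ ∣ orderOf x := orderOf_map_dvd _ x
  have hpow := orderOf_eq_mul_of_unitsMap_eq_one hp hk (hkn.trans hnm) hnm (x := x ^ orderOf xₖ)
    (by rw [map_pow, pow_orderOf_eq_one])
    (by
      rw [map_pow, Ne, ← orderOf_dvd_iff_pow_eq_one]
      exact fun h => hx (hdvd_n.antisymm h))
  have hne : orderOf xₖ ≠ 0 := (orderOf_pos xₖ).ne'
  rw [map_pow, orderOf_pow_of_dvd hne hdvd, orderOf_pow_of_dvd hne hdvd_n] at hpow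
  rw [← Nat.mul_div_cancel' hdvd, hpow, ← mul_assoc, Nat.mul_div_cancel' hdvd_n]

end PrimePow

theorem preimage_cyclic_two_adic_general {p k n m : ℕ} (hp : p.Prime) (hk : k + 2 ≤ p * k)
    (hkn : k ≤ n) (hnm : n ≤ m) (B : Subgroup (ZMod (p ^ n))ˣ) [IsCyclic B]
    (hB : ¬ Set.InjOn (ZMod.unitsMap (pow_dvd_pow p hkn)) B) :
    IsCyclic (B.comap (ZMod.unitsMap (pow_dvd_pow p hnm))) := by
  have : NeZero p := ⟨hp.ne_zero⟩
  have hk0 : k ≠ 0 := by rintro rfl; simp at hk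
  obtain ⟨g, rfl⟩ := B.isCyclic_iff_exists_zpowers_eq_top.mp ‹_›
  obtain ⟨x, rfl⟩ := ZMod.unitsMap_surjective (pow_dvd_pow p hnm) g
  refine isCyclic_comap_zpowers_of_ker_le _ (ker_le_zpowers_of_orderOf_eq _ (orderOf_pos _).ne' ?_)
  rw [card_ker_unitsMap_prime_pow hp (by omega) hnm]
  refine orderOf_eq_orderOf_unitsMap_mul hp hk hkn hnm fun horder => hB ?_
  refine injOn_zpowers_of_orderOf_map_eq _ (Eq.trans ?_ horder)
  rw [← MonoidHom.comp_apply, ZMod.unitsMap_comp]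

/-- For `3 ≤ n ≤ m` and a cyclic subgroup `B` of `(ℤ/2^nℤ)ˣ` of order at least `4`,
the preimage of `B` under the natural projection `(ℤ/2^mℤ)ˣ → (ℤ/2^nℤ)ˣ` is cyclic. -/
theorem preimage_cyclic_two_adic (n m : ℕ) (hn : 3 ≤ n) (hm : n ≤ m)
    (B : Subgroup ((ZMod (2 ^ n))ˣ)) (hB : IsCyclic B) (hcard : 4 ≤ Nat.card B) :
    IsCyclic (Subgroup.comap
      (Units.map (ZMod.castHom (pow_dvd_pow 2 hm) (ZMod (2 ^ n))).toMonoidHom) B) :=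
  preimage_cyclic_two_adic_general (k := 2) Nat.prime_two le_rfl (by omega) hm B
    (not_injOn_unitsMap_of_totient_lt_card _ (hcard.trans_lt' (by decide)))
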